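/- For the multi-task structure with q ≥ 2: the number of policies is N = q^M, S(Θ) = S*(Θ) = q, D*(Θ) = log q (attained at the uniform distribution on [K]), and consequently S*(Θ)·log N = K·D*(Θ). -/

import Mathlib

open Finset

noncomputable section

/-- `p` is a probability vector on the finite arm set `α`. -/
def IsProbVec {α : Type*} [Fintype α] (p : α → ℝ) : Prop :=
  (∀ a, 0 ≤ p a) ∧ ∑ a, p a = 1

/-- KL-divergence `D(p‖q) = ∑_{a : p(a)>0} p(a) log (p(a)/q(a))`, equal to `+∞` if
`p(a) > 0` for some `a` with `q(a) = 0`. -/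
def KL {α : Type*} [Fintype α] (p q : α → ℝ) : ENNReal :=
  if ∀ a, q a = 0 → p a = 0 then
    ENNReal.ofReal (∑ a ∈ Finset.univ.filter (fun a : α => 0 < p a),
      p a * Real.log (p a / q a))
  else ⊤

/-- `D*(Θ) = inf_τ max_θ D(θ‖τ)` for a family of policies indexed by `ι`. -/
def DstarF {α : Type*} [Fintype α] {ι : Type*} (θ : ι → α → ℝ) : ENNReal :=
  ⨅ τ : {τ : α → ℝ // IsProbVec τ}, ⨆ c : ι, KL (θ c) τ.1

lemma kl_aux {M q : ℕ} (hM : 1 ≤ M) (c : Fin M → Fin q) (τ : Fin M × Fin q → ℝ)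
    (hτ : ∀ a, 0 < τ a) :
    KL (fun a : Fin M × Fin q => if a.2 = c a.1 then (1 : ℝ) / M else 0) τ =
      ENNReal.ofReal (∑ i, (1 : ℝ) / M * Real.log ((1 : ℝ) / M / τ (i, c i))) := by
  have hM' : (0 : ℝ) < 1 / M := by
    have : (0 : ℝ) < M := by exact_mod_cast hM
    positivity
  unfold KL
  rw [if_pos (fun a h => absurd h (hτ a).ne')]
  congr 1
  rw [Finset.sum_filter, Fintype.sum_prod_type]
  refine Finset.sum_congr rfl fun i _ => ?_
  rw [Finset.sum_eq_single (c i)]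
  · simp only [if_true]
    rw [if_pos hM']
  · intro j _ hj
    simp [hj]
  · simp

lemma sup_aux {M q : ℕ} (hq : 2 ≤ q) (a : Fin M × Fin q) :
    (⨆ c : Fin M → Fin q, (if a.2 = c a.1 then (1 : ℝ) / M else 0)) = 1 / M := by
  have : Nonempty (Fin M → Fin q) := ⟨fun _ => a.2⟩
  apply le_antisymm
  · apply ciSup_le
    intro c
    split_ifs
    · exact le_rfl
    · positivity
  · have := le_ciSup (f := fun c : Fin M → Fin q => (if a.2 = c a.1 then (1 : ℝ) / M else 0))
      (Set.finite_range _).bddAbove (fun _ => a.2)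
    simpa using this

lemma inf_aux {M q : ℕ} (hq : 2 ≤ q) (a : Fin M × Fin q) :
    (⨅ c : Fin M → Fin q, (if a.2 = c a.1 then (1 : ℝ) / M else 0)) = 0 := by
  have : Nonempty (Fin M → Fin q) := ⟨fun _ => a.2⟩
  have : Nontrivial (Fin q) := Fin.nontrivial_iff_two_le.2 hq
  obtain ⟨b, hb⟩ := exists_ne a.2
  apply le_antisymm
  · have := ciInf_le (f := fun c : Fin M → Fin q => (if a.2 = c a.1 then (1 : ℝ) / M else 0))
      (Set.finite_range _).bddBelow (fun _ => b)
    simpa [hb.symm] using this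
  · apply le_ciInf
    intro c
    split_ifs
    · positivity
    · exact le_rfl

lemma unif_aux {M q : ℕ} (hq : 2 ≤ q) (hM : 1 ≤ M) :
    (⨆ c : Fin M → Fin q,
        KL (fun a : Fin M × Fin q => if a.2 = c a.1 then (1 : ℝ) / M else 0)
          (fun _ : Fin M × Fin q => (1 : ℝ) / (q * M))) =
      ENNReal.ofReal (Real.log q) := by
  have hM0 : (0 : ℝ) < M := by exact_mod_cast hM
  have hq0 : (0 : ℝ) < q := by exact_mod_cast (by omega : 0 < q)
  have : Nonempty (Fin M → Fin q) := ⟨fun _ => ⟨0, by omega⟩⟩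
  have h : ∀ c : Fin M → Fin q,
      KL (fun a : Fin M × Fin q => if a.2 = c a.1 then (1 : ℝ) / M else 0)
          (fun _ : Fin M × Fin q => (1 : ℝ) / (q * M)) = ENNReal.ofReal (Real.log q) := by
    intro c
    rw [kl_aux hM c _ (fun _ => by positivity)]
    congr 1
    have : (1 : ℝ) / M / (1 / (q * M)) = q := by field_simp
    simp only [this, Finset.sum_const, Finset.card_univ, Fintype.card_fin, nsmul_eq_mul]
    field_simp
  simp only [h, ciSup_const]

lemma lower_aux {M q : ℕ} (hq : 2 ≤ q) (hM : 1 ≤ M) (τ : Fin M × Fin q → ℝ)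
    (hτ : IsProbVec τ) :
    ENNReal.ofReal (Real.log q) ≤ ⨆ c : Fin M → Fin q,
        KL (fun a : Fin M × Fin q => if a.2 = c a.1 then (1 : ℝ) / M else 0) τ := by
  have hM0 : (0 : ℝ) < M := by exact_mod_cast hM
  have hq0 : (0 : ℝ) < q := by exact_mod_cast (by omega : 0 < q)
  have : Nonempty (Fin q) := ⟨⟨0, by omega⟩⟩
  by_cases hz : ∃ a, τ a = 0
  · obtain ⟨a, ha⟩ := hz
    refine le_trans ?_ (le_iSup _ (fun _ => a.2))
    unfold KL
    rw [if_neg]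
    · exact le_top
    · intro h
      have := h a ha
      simp at this
      omega
  · push Not at hz
    have hpos : ∀ a, 0 < τ a := fun a => lt_of_le_of_ne (hτ.1 a) (hz a).symm
    choose c hc using fun i : Fin M => Finite.exists_min (fun j : Fin q => τ (i, j))
    refine le_trans ?_ (le_iSup _ c)
    rw [kl_aux hM c τ hpos]
    apply ENNReal.ofReal_le_ofReal
    have h1 : ∑ i, (q : ℝ) * τ (i, c i) ≤ 1 := by
      rw [← hτ.2, Fintype.sum_prod_type]
      refine Finset.sum_le_sum fun i _ => ?_
      have := Finset.card_nsmul_le_sum Finset.univ (fun j : Fin q => τ (i, j)) (τ (i, c i))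
        (fun j _ => hc i j)
      simpa using this
    have h2 : ∀ i, (1 : ℝ) / M * (Real.log q + 1) - q * τ (i, c i) ≤
        (1 : ℝ) / M * Real.log ((1 : ℝ) / M / τ (i, c i)) := by
      intro i
      have ht := hpos (i, c i)
      have hl := Real.log_le_sub_one_of_pos (by positivity : 0 < M * q * τ (i, c i))
      have e : (1 : ℝ) / M / τ (i, c i) = q / (M * q * τ (i, c i)) := by field_simp
      rw [e, Real.log_div hq0.ne' (by positivity)]
      have e2 : (1 : ℝ) / M * (Real.log q + 1) - q * τ (i, c i) =
        (1 : ℝ) / M * (Real.log q + 1 - M * q * τ (i, c i)) := by field_simp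
      rw [e2]
      apply mul_le_mul_of_nonneg_left _ (by positivity)
      linarith
    have h3 := Finset.sum_le_sum fun i (_ : i ∈ Finset.univ) => h2 i
    rw [Finset.sum_sub_distrib] at h3
    have h4 : ∑ _i : Fin M, (1 : ℝ) / M * (Real.log q + 1) = Real.log q + 1 := by
      simp only [Finset.sum_const, Finset.card_univ, Fintype.card_fin, nsmul_eq_mul]
      field_simp
    linarith

/-- Multi-task structure: the arms are pairs `(i,j) ∈ [M] × [q]` and each policy puts
mass `1/M` on exactly one arm of each section `i`, i.e. is determined by a choice
function `c : [M] → [q]`.  For `q ≥ 2`: `N = q^M`, `S(Θ) = S*(Θ) = q`,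
`D*(Θ) = log q` (attained at the uniform distribution on the `K = qM` arms), and
consequently `S*(Θ)·log N = K·D*(Θ)`. -/
theorem multi_task_structure {M q : ℕ} (hq : 2 ≤ q) (hM : 1 ≤ M) :
    Fintype.card (Fin M → Fin q) = q ^ M ∧
    (∑ a : Fin M × Fin q,
        ⨆ c : Fin M → Fin q, (if a.2 = c a.1 then (1 : ℝ) / M else 0)) = (q : ℝ) ∧
    (∑ a : Fin M × Fin q,
        ((⨆ c : Fin M → Fin q, (if a.2 = c a.1 then (1 : ℝ) / M else 0)) -
          ⨅ c : Fin M → Fin q, (if a.2 = c a.1 then (1 : ℝ) / M else 0))) = (q : ℝ) ∧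
    (⨆ c : Fin M → Fin q,
        KL (fun a : Fin M × Fin q => if a.2 = c a.1 then (1 : ℝ) / M else 0)
          (fun _ : Fin M × Fin q => (1 : ℝ) / (q * M))) =
      ENNReal.ofReal (Real.log q) ∧
    DstarF (fun (c : Fin M → Fin q) (a : Fin M × Fin q) =>
        if a.2 = c a.1 then (1 : ℝ) / M else 0) = ENNReal.ofReal (Real.log q) ∧
    (q : ℝ) * Real.log ((q : ℝ) ^ M) = ((q : ℝ) * M) * Real.log q := by
  have hM0 : (0 : ℝ) < M := by exact_mod_cast hM
  have hq0 : (0 : ℝ) < q := by exact_mod_cast (by omega : 0 < q)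
  have hs : ∑ _a : Fin M × Fin q, (1 : ℝ) / M = q := by
    simp only [Finset.sum_const, Finset.card_univ, Fintype.card_prod, Fintype.card_fin,
      nsmul_eq_mul]
    push_cast
    field_simp
  refine ⟨by simp, ?_, ?_, unif_aux hq hM, ?_, ?_⟩
  · simp only [sup_aux hq]
    exact hs
  · simp only [sup_aux hq, inf_aux hq, sub_zero]
    exact hs
  · unfold DstarF
    apply le_antisymm
    · have hu : IsProbVec (fun _ : Fin M × Fin q => (1 : ℝ) / (q * M)) := by
        refine ⟨fun _ => by positivity, ?_⟩
        simp only [Finset.sum_const, Finset.card_univ, Fintype.card_prod, Fintype.card_fin,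
          nsmul_eq_mul]
        push_cast
        field_simp
      rw [← unif_aux hq hM]
      exact iInf_le (fun τ : {τ : Fin M × Fin q → ℝ // IsProbVec τ} => ⨆ c : Fin M → Fin q,
        KL (fun a : Fin M × Fin q => if a.2 = c a.1 then (1 : ℝ) / M else 0) τ.1)
        ⟨fun _ : Fin M × Fin q => (1 : ℝ) / (q * M), hu⟩
    · exact le_iInf fun τ => lower_aux hq hM τ.1 τ.2
  · rw [Real.log_pow]
    ring
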